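/- Let ‖·‖ be a norm on ℝ^n all of whose unit-ball extreme points a ∈ G satisfy ‖a‖_u = 1, and suppose ‖·‖ is decomposable. Then for every x ∈ ℝ^n \ {0} and every a₁ ∈ argmax_{a ∈ G} ⟨a, x⟩ there exist a₂, …, a_k ∈ G such that {a₁, …, a_k} is an orthogonal set (with respect to ⟨·,·⟩) satisfying: (I) there exist γ₁, …, γ_k > 0 with x = Σ_{i=1}^k γᵢ aᵢ and ‖x‖ = Σ_{i=1}^k γᵢ; and (II) for every choice of scalars η₁, …, η_k with |ηᵢ| ≤ 1, one has ‖Σ_{i=1}^k ηᵢ aᵢ‖* ≤ 1. -/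

import Mathlib

/-!
Every extreme point `a` of the unit ball has `‖a‖ᵤ = 1`, so the unit ball of `N` lies in the unit
ball of `‖·‖ᵤ`, and the extreme points lie in the dual unit ball. Hence `a` is the element of
least `‖·‖ᵤ`-norm in `∂N(a)`, which forces `e a = a`: the decomposition at `a` reads
`∂N(a) = a + {v ∈ (T a)ᗮ : ‖v‖* ≤ 1}`.

If `a` maximizes `⟪·, r⟫` over the unit ball and `M = ⟪a, r⟫`, then `r / M ∈ ∂N(a)`, so
`r - M a ∈ (T a)ᗮ` (`sub_smul_mem_of_max`). If moreover `r ∈ (T b)ᗮ` for another extreme point `b`,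
then `b` and `a` are orthogonal, with `b ∈ (T a)ᗮ` and `a ∈ (T b)ᗮ` (`cross_mem`). Thus greedily
subtracting from `x` its component along a maximizing extreme point produces extreme points `aᵢ`
with `aᵢ ∈ (T aⱼ)ᗮ` for `i ≠ j`, and a remainder in every `(T aᵢ)ᗮ`. The `aᵢ` are orthonormal, so
the remainder vanishes after at most `n` steps. Property (II) follows by adding one `aᵢ` at a time,
and (I) follows from the triangle inequality together with (II) at `η = 1`.
-/

open Matrix

namespace PGH

variable {n m : ℕ}

/-- The inner product `⟪x, y⟫ = xᵀ B y` on `ℝⁿ` induced by a matrix `B`. -/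
def ip (B : Matrix (Fin n) (Fin n) ℝ) (x y : Fin n → ℝ) : ℝ :=
  dotProduct x (B.mulVec y)

/-- The norm `‖x‖ᵤ = √(xᵀ B x)` induced by the inner product. -/
noncomputable def normu (B : Matrix (Fin n) (Fin n) ℝ) (x : Fin n → ℝ) : ℝ :=
  Real.sqrt (ip B x x)

/-- `N` is a norm on `ℝⁿ`. -/
structure IsNorm (N : (Fin n → ℝ) → ℝ) : Prop where
  nonneg : ∀ x, 0 ≤ N x
  eq_zero_iff : ∀ x, N x = 0 ↔ x = 0
  triangle : ∀ x y, N (x + y) ≤ N x + N y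
  smul_eq : ∀ (c : ℝ) (x), N (c • x) = |c| * N x

/-- The dual norm `‖y‖* = sup {⟪y, x⟫ : N x ≤ 1}`. -/
noncomputable def dualNorm (B : Matrix (Fin n) (Fin n) ℝ) (N : (Fin n → ℝ) → ℝ)
    (y : Fin n → ℝ) : ℝ :=
  sSup ((fun x => ip B y x) '' {x | N x ≤ 1})

/-- The subdifferential of `N` at `x` with respect to `⟪·,·⟫`. -/
def subdiff (B : Matrix (Fin n) (Fin n) ℝ) (N : (Fin n → ℝ) → ℝ) (x : Fin n → ℝ) :
    Set (Fin n → ℝ) :=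
  {z | ∀ y, N x + ip B z (y - x) ≤ N y}

/-- The set `G` of extreme points of the unit ball of `N`. -/
def extPts (N : (Fin n → ℝ) → ℝ) : Set (Fin n → ℝ) :=
  Set.extremePoints ℝ {x | N x ≤ 1}

/-- The orthogonal complement (w.r.t. `⟪·,·⟫`) of a subspace `T`, as a set. -/
def perp (B : Matrix (Fin n) (Fin n) ℝ) (T : Submodule ℝ (Fin n → ℝ)) :
    Set (Fin n → ℝ) :=
  {v | ∀ u ∈ T, ip B u v = 0}

/-- A decomposability structure for the norm `N`: for every `x` there are a subspace `T x`
and a vector `e x ∈ T x` with `∂N(x) = {e x + v : v ∈ (T x)ᗮ, ‖v‖* ≤ 1}`. -/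
structure DecompStruct (B : Matrix (Fin n) (Fin n) ℝ) (N : (Fin n → ℝ) → ℝ) where
  T : (Fin n → ℝ) → Submodule ℝ (Fin n → ℝ)
  e : (Fin n → ℝ) → (Fin n → ℝ)
  e_mem : ∀ x, e x ∈ T x
  subdiff_eq : ∀ x, subdiff B N x =
    {ξ | ∃ v ∈ perp B (T x), dualNorm B N v ≤ 1 ∧ ξ = e x + v}

/-- `K x = ‖e x‖ᵤ²`. -/
noncomputable def Kfun (B : Matrix (Fin n) (Fin n) ℝ) (N : (Fin n → ℝ) → ℝ)
    (D : DecompStruct B N) (x : Fin n → ℝ) : ℝ :=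
  (normu B (D.e x)) ^ 2

/-- Squared Euclidean norm `‖v‖₂²` on `ℝᵐ`. -/
def sq2 (v : Fin m → ℝ) : ℝ := dotProduct v v

/-- The least-squares loss `f(x) = ½ ‖A x - b‖₂²`. -/
noncomputable def fls (A : Matrix (Fin m) (Fin n) ℝ) (b : Fin m → ℝ) (x : Fin n → ℝ) : ℝ :=
  (1 / 2) * sq2 (A.mulVec x - b)

/-- The adjoint `A* = B⁻¹ Aᵀ` of `A` w.r.t. `⟪·,·⟫`. -/
noncomputable def Astar (B : Matrix (Fin n) (Fin n) ℝ) (A : Matrix (Fin m) (Fin n) ℝ) :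
    Matrix (Fin n) (Fin m) ℝ := B⁻¹ * Aᵀ

/-- The gradient `∇f(x) = A*(A x - b)` of the least-squares loss w.r.t. `⟪·,·⟫`. -/
noncomputable def gradf (B : Matrix (Fin n) (Fin n) ℝ) (A : Matrix (Fin m) (Fin n) ℝ)
    (b : Fin m → ℝ) (x : Fin n → ℝ) : Fin n → ℝ :=
  (Astar B A).mulVec (A.mulVec x - b)

/-- `ρ` is a valid lower restricted isometry constant of `A` at level `k`. -/
def IsLowerRIP (B : Matrix (Fin n) (Fin n) ℝ) (N : (Fin n → ℝ) → ℝ)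
    (A : Matrix (Fin m) (Fin n) ℝ) (k ρ : ℝ) : Prop :=
  0 < ρ ∧ ∀ x : Fin n → ℝ, (N x) ^ 2 ≤ k * (normu B x) ^ 2 →
    ρ * (normu B x) ^ 2 ≤ sq2 (A.mulVec x)

/-- `ρ` is a valid upper restricted isometry constant of `A` at level `k`. -/
def IsUpperRIP (B : Matrix (Fin n) (Fin n) ℝ) (N : (Fin n → ℝ) → ℝ)
    (A : Matrix (Fin m) (Fin n) ℝ) (k ρ : ℝ) : Prop :=
  0 < ρ ∧ ∀ x : Fin n → ℝ, (N x) ^ 2 ≤ k * (normu B x) ^ 2 →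
    sq2 (A.mulVec x) ≤ ρ * (normu B x) ^ 2

/-- The regularized objective `φ_λ(x) = f(x) + λ N(x)`. -/
noncomputable def phi (A : Matrix (Fin m) (Fin n) ℝ) (b : Fin m → ℝ)
    (N : (Fin n → ℝ) → ℝ) (lam : ℝ) (x : Fin n → ℝ) : ℝ :=
  fls A b x + lam * N x

/-- The proximal model `m_{λ,L}(y, x)`. -/
noncomputable def mdl (B : Matrix (Fin n) (Fin n) ℝ) (A : Matrix (Fin m) (Fin n) ℝ)
    (b : Fin m → ℝ) (N : (Fin n → ℝ) → ℝ) (lam L : ℝ) (y x : Fin n → ℝ) : ℝ :=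
  fls A b y + ip B (gradf B A b y) (x - y) + (L / 2) * (normu B (x - y)) ^ 2 + lam * N x

/-- `xp = Prox_{λ,L}(y)`, i.e. `xp` minimizes `m_{λ,L}(y, ·)`. -/
def IsProx (B : Matrix (Fin n) (Fin n) ℝ) (A : Matrix (Fin m) (Fin n) ℝ)
    (b : Fin m → ℝ) (N : (Fin n → ℝ) → ℝ) (lam L : ℝ) (y xp : Fin n → ℝ) : Prop :=
  ∀ u, mdl B A b N lam L y xp ≤ mdl B A b N lam L y u

/-- `ω_λ(x) = min_{ξ ∈ ∂N(x)} ‖λ ξ + ∇f(x)‖*`. -/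
noncomputable def omega (B : Matrix (Fin n) (Fin n) ℝ) (A : Matrix (Fin m) (Fin n) ℝ)
    (b : Fin m → ℝ) (N : (Fin n → ℝ) → ℝ) (lam : ℝ) (x : Fin n → ℝ) : ℝ :=
  sInf ((fun ξ => dualNorm B N (lam • ξ + gradf B A b x)) '' subdiff B N x)

/-- Assumption 1 of the paper, phrased for given valid restricted isometry constants
`ρlow = ρ₋(A, c k₀ (1+γ)²)`, `ρlow2 = ρ₋(A, 72 r c k₀ (1+γ) γinc)` and
`ρup2 = ρ₊(A, 72 r c k₀ (1+γ) γinc)`. -/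
def Assumption1 (B : Matrix (Fin n) (Fin n) ℝ) (N : (Fin n → ℝ) → ℝ)
    (A : Matrix (Fin m) (Fin n) ℝ) (z : Fin m → ℝ)
    (c k₀ γinc lamtgt r δ γ ρlow ρlow2 ρup2 : ℝ) : Prop :=
  dualNorm B N ((Astar B A).mulVec z) ≤ lamtgt / 4 ∧
  1 < r ∧ 0 < δ ∧ δ ≤ 1 / 4 ∧
  γ = (lamtgt * (1 + δ) + dualNorm B N ((Astar B A).mulVec z)) /
      (lamtgt * (1 - δ) - dualNorm B N ((Astar B A).mulVec z)) ∧
  IsLowerRIP B N A (c * k₀ * (1 + γ) ^ 2) ρlow ∧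
  IsLowerRIP B N A (72 * r * c * k₀ * (1 + γ) * γinc) ρlow2 ∧
  IsUpperRIP B N A (72 * r * c * k₀ * (1 + γ) * γinc) ρup2 ∧
  ρlow / ρup2 > c / r

/-- One backtracking step: `M` is the smallest element of `{Lt γinc^j : j ≥ 0}`
for which the proximal point is accepted, and `xt1` is that proximal point. -/
def BacktrackMin (B : Matrix (Fin n) (Fin n) ℝ) (A : Matrix (Fin m) (Fin n) ℝ)
    (b : Fin m → ℝ) (N : (Fin n → ℝ) → ℝ) (lam γinc Lt : ℝ)
    (xt : Fin n → ℝ) (M : ℝ) (xt1 : Fin n → ℝ) : Prop :=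
  (∃ j : ℕ, M = Lt * γinc ^ j) ∧
  IsProx B A b N lam M xt xt1 ∧
  phi A b N lam xt1 ≤ mdl B A b N lam M xt xt1 ∧
  ∀ j : ℕ, Lt * γinc ^ j < M →
    ∀ u, IsProx B A b N lam (Lt * γinc ^ j) xt u →
      ¬ phi A b N lam u ≤ mdl B A b N lam (Lt * γinc ^ j) xt u

/-- The iterates of the proximal-gradient subroutine with backtracking. -/
structure ProxGradSeq (B : Matrix (Fin n) (Fin n) ℝ) (A : Matrix (Fin m) (Fin n) ℝ)
    (b : Fin m → ℝ) (N : (Fin n → ℝ) → ℝ) (lam γinc γdec Lmin : ℝ)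
    (x : ℕ → Fin n → ℝ) (L M : ℕ → ℝ) : Prop where
  step : ∀ t, BacktrackMin B A b N lam γinc (L t) (x t) (M (t + 1)) (x (t + 1))
  Lupdate : ∀ t, L (t + 1) = max Lmin (M (t + 1) / γdec)

/-- The quantity `‖M (x⁻ - x) + ∇f(x) - ∇f(x⁻)‖*` used in the stopping criterion. -/
noncomputable def stopQ (B : Matrix (Fin n) (Fin n) ℝ) (A : Matrix (Fin m) (Fin n) ℝ)
    (b : Fin m → ℝ) (N : (Fin n → ℝ) → ℝ) (Mt : ℝ) (xprev xcur : Fin n → ℝ) : ℝ :=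
  dualNorm B N (Mt • (xprev - xcur) + (gradf B A b xcur - gradf B A b xprev))


section Helpers

variable {B : Matrix (Fin n) (Fin n) ℝ} {N : (Fin n → ℝ) → ℝ}

/-! ### The inner product -/

lemma ip_add_left (x y z : Fin n → ℝ) : ip B (x + y) z = ip B x z + ip B y z := by
  simp [ip, add_dotProduct]

lemma ip_sub_left (x y z : Fin n → ℝ) : ip B (x - y) z = ip B x z - ip B y z := by
  simp [ip, sub_dotProduct]

lemma ip_neg_left (x z : Fin n → ℝ) : ip B (-x) z = -ip B x z := by
  simp [ip, neg_dotProduct]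

lemma ip_smul_left (c : ℝ) (x z : Fin n → ℝ) : ip B (c • x) z = c * ip B x z := by
  simp [ip, smul_dotProduct]

lemma ip_add_right (x y z : Fin n → ℝ) : ip B x (y + z) = ip B x y + ip B x z := by
  simp [ip, mulVec_add, dotProduct_add]

lemma ip_sub_right (x y z : Fin n → ℝ) : ip B x (y - z) = ip B x y - ip B x z := by
  simp [ip, mulVec_sub, dotProduct_sub]

lemma ip_neg_right (x z : Fin n → ℝ) : ip B x (-z) = -ip B x z := by
  simp [ip, mulVec_neg, dotProduct_neg]

lemma ip_smul_right (c : ℝ) (x z : Fin n → ℝ) : ip B x (c • z) = c * ip B x z := by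
  simp [ip, mulVec_smul, dotProduct_smul]

lemma ip_sum_left {ι : Type*} (s : Finset ι) (f : ι → Fin n → ℝ) (z : Fin n → ℝ) :
    ip B (∑ i ∈ s, f i) z = ∑ i ∈ s, ip B (f i) z := by
  simp [ip, sum_dotProduct]

lemma ip_sum_right {ι : Type*} (s : Finset ι) (f : ι → Fin n → ℝ) (z : Fin n → ℝ) :
    ip B z (∑ i ∈ s, f i) = ∑ i ∈ s, ip B z (f i) := by
  classical
  induction s using Finset.induction_on with
  | empty => simp [ip]
  | insert a s ha ih => rw [Finset.sum_insert ha, Finset.sum_insert ha, ip_add_right, ih]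

lemma ip_comm (hB : B.PosDef) (x y : Fin n → ℝ) : ip B x y = ip B y x := by
  have h : Bᵀ = B := by simpa [Matrix.IsSymm] using hB.1
  unfold ip
  conv_lhs => rw [dotProduct_mulVec, ← mulVec_transpose, h, dotProduct_comm]

lemma ip_self_pos (hB : B.PosDef) {x : Fin n → ℝ} (hx : x ≠ 0) : 0 < ip B x x := by
  simpa [ip] using hB.dotProduct_mulVec_pos hx

lemma ip_self_nonneg (hB : B.PosDef) (x : Fin n → ℝ) : 0 ≤ ip B x x := by
  by_cases h : x = 0
  · simp [h, ip]
  · exact (ip_self_pos hB h).le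

lemma continuous_ip (y : Fin n → ℝ) : Continuous fun z => ip B y z := by
  unfold ip dotProduct mulVec dotProduct
  fun_prop

/-- The orthogonal complement of `T` as a subspace; its carrier is `perp B T`. -/
def perpSub (B : Matrix (Fin n) (Fin n) ℝ) (T : Submodule ℝ (Fin n → ℝ)) :
    Submodule ℝ (Fin n → ℝ) where
  carrier := perp B T
  add_mem' {a b} ha hb u hu := by rw [ip_add_right, ha u hu, hb u hu, add_zero]
  zero_mem' u _ := by simp [ip]
  smul_mem' c a ha u hu := by rw [ip_smul_right, ha u hu, mul_zero]

/-! ### Compactness of the unit ball and existence of extreme maximizers -/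

lemma IsNorm.neg (hN : IsNorm N) (x : Fin n → ℝ) : N (-x) = N x := by
  simpa using hN.smul_eq (-1) x

lemma IsNorm.map_zero (hN : IsNorm N) : N 0 = 0 := (hN.eq_zero_iff 0).2 rfl

lemma IsNorm.pos (hN : IsNorm N) {x : Fin n → ℝ} (hx : x ≠ 0) : 0 < N x :=
  lt_of_le_of_ne (hN.nonneg x) fun h => hx ((hN.eq_zero_iff x).1 h.symm)

lemma IsNorm.inv_smul (hN : IsNorm N) {x : Fin n → ℝ} (hx : x ≠ 0) : N ((N x)⁻¹ • x) = 1 := by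
  rw [hN.smul_eq, abs_of_pos (inv_pos.2 (hN.pos hx)), inv_mul_cancel₀ (hN.pos hx).ne']

lemma IsNorm.continuous (hN : IsNorm N) : Continuous N := by
  have h : ConvexOn ℝ Set.univ N := by
    refine ⟨convex_univ, fun x _ y _ a b ha hb _ => ?_⟩
    refine (hN.triangle _ _).trans ?_
    rw [hN.smul_eq, hN.smul_eq, abs_of_nonneg ha, abs_of_nonneg hb]
    rfl
  exact h.locallyLipschitz.continuous

lemma IsNorm.isCompact_ball (hN : IsNorm N) : IsCompact {x | N x ≤ 1} := by
  obtain ⟨c, hc, h⟩ := (isCompact_sphere (0 : Fin n → ℝ) 1).exists_forall_le' (a := 0)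
    hN.continuous.continuousOn (fun b hb => hN.pos (by rintro rfl; simp at hb))
  refine Metric.isCompact_of_isClosed_isBounded (isClosed_le hN.continuous continuous_const) ?_
  refine isBounded_iff_forall_norm_le.2 ⟨c⁻¹, fun z hz => ?_⟩
  by_cases h0 : z = 0
  · simp [h0, hc.le]
  have hz0 : 0 < ‖z‖ := norm_pos_iff.2 h0
  have := h (‖z‖⁻¹ • z) (by simp [norm_smul, hz0.ne'])
  rw [hN.smul_eq, abs_of_pos (inv_pos.2 hz0)] at this
  have hz' : N z ≤ 1 := hz
  have h2 : c * ‖z‖ ≤ 1 := by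
    have h3 := mul_le_mul_of_nonneg_right this hz0.le
    rw [mul_right_comm, inv_mul_cancel₀ hz0.ne', one_mul] at h3
    linarith
  rw [← one_div, le_div_iff₀ hc]
  linarith

/-- A linear functional attains its maximum over the unit ball at an extreme point: the
maximizers form an exposed face, whose extreme points are extreme in the ball. -/
lemma exists_ext_max (hN : IsNorm N) (y : Fin n → ℝ) :
    ∃ a ∈ extPts N, ∀ z, N z ≤ 1 → ip B y z ≤ ip B y a := by
  let l : StrongDual ℝ (Fin n → ℝ) :=
    ⟨⟨⟨fun z => ip B y z, ip_add_right y⟩, fun c z => ip_smul_right c y z⟩, continuous_ip y⟩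
  have hE : IsExposed ℝ {x | N x ≤ 1} (l.toExposed {x | N x ≤ 1}) :=
    ContinuousLinearMap.toExposed.isExposed
  obtain ⟨m, hm, hmax⟩ := hN.isCompact_ball.exists_isMaxOn ⟨0, by simp [hN.map_zero]⟩
    l.continuous.continuousOn
  obtain ⟨a, ha⟩ := (hE.isCompact hN.isCompact_ball).extremePoints_nonempty
    ⟨m, hm, fun z hz => hmax hz⟩
  exact ⟨a, hE.isExtreme.extremePoints_subset_extremePoints ha, fun z hz => ha.1.2 z hz⟩

/-! ### The dual unit ball -/

/-- `y` lies in the dual unit ball: `⟪y, z⟫ ≤ 1` for all `z` with `N z ≤ 1`. This is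
`‖y‖* ≤ 1` without the supremum. -/
def InDual (B : Matrix (Fin n) (Fin n) ℝ) (N : (Fin n → ℝ) → ℝ) (y : Fin n → ℝ) : Prop :=
  ∀ z, N z ≤ 1 → ip B y z ≤ 1

lemma dualNorm_le_one_iff (hN : IsNorm N) (y : Fin n → ℝ) :
    dualNorm B N y ≤ 1 ↔ InDual B N y := by
  constructor
  · intro h z hz
    refine le_trans (le_csSup ?_ (Set.mem_image_of_mem _ hz)) h
    exact (hN.isCompact_ball.image (continuous_ip y)).bddAbove
  · intro h
    refine csSup_le ⟨_, Set.mem_image_of_mem _ (show N 0 ≤ 1 by simp [hN.map_zero])⟩ ?_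
    rintro _ ⟨z, hz, rfl⟩
    exact h z hz

lemma InDual.neg (hN : IsNorm N) {y : Fin n → ℝ} (h : InDual B N y) : InDual B N (-y) := by
  intro z hz
  have := h (-z) (by rwa [hN.neg])
  rwa [ip_neg_right, ← ip_neg_left] at this

lemma InDual.le (hN : IsNorm N) {y : Fin n → ℝ} (h : InDual B N y) (z : Fin n → ℝ) :
    ip B y z ≤ N z := by
  by_cases h0 : z = 0
  · simp [h0, ip, hN.map_zero]
  have := h _ (hN.inv_smul h0).le
  rwa [ip_smul_right, inv_mul_le_iff₀ (hN.pos h0), mul_one] at this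

lemma mem_subdiff_iff (hN : IsNorm N) (x z : Fin n → ℝ) :
    z ∈ subdiff B N x ↔ InDual B N z ∧ ip B z x = N x := by
  constructor
  · intro h
    have h0 := h 0
    have h2 := h ((2 : ℝ) • x)
    rw [hN.map_zero, ip_sub_right, show ip B z 0 = 0 by simp [ip]] at h0
    rw [hN.smul_eq, ip_sub_right, ip_smul_right, abs_of_pos (two_pos)] at h2
    have he : ip B z x = N x := by linarith
    refine ⟨fun y hy => ?_, he⟩
    have := h y
    rw [ip_sub_right] at this
    linarith
  · rintro ⟨h, he⟩ y
    rw [ip_sub_right, he]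
    have := h.le hN y
    linarith

/-! ### Extreme points of unit `‖·‖ᵤ`-norm -/

lemma ext_ip_self {a : Fin n → ℝ} (h : normu B a = 1) : ip B a a = 1 := by
  rwa [normu, Real.sqrt_eq_one] at h

/-- The unit ball of `N` lies in the unit ball of `‖·‖ᵤ`. -/
lemma ip_self_le_one (hB : B.PosDef) (hN : IsNorm N)
    (hExt : ∀ a ∈ extPts N, normu B a = 1)
    {z : Fin n → ℝ} (hz : N z ≤ 1) : ip B z z ≤ 1 := by
  obtain ⟨a, ha, hmax⟩ := exists_ext_max (B := B) hN z
  have h1 := hmax z hz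
  have h2 := ip_self_nonneg hB (z - a)
  rw [ip_sub_left, ip_sub_right, ip_sub_right, ip_comm hB a z,
    ext_ip_self (hExt a ha)] at h2
  linarith

lemma inDual_ext (hB : B.PosDef) (hN : IsNorm N)
    (hExt : ∀ a ∈ extPts N, normu B a = 1)
    {a : Fin n → ℝ} (ha : a ∈ extPts N) : InDual B N a := by
  intro z hz
  have h1 := ip_self_le_one hB hN hExt hz
  have h2 := ip_self_nonneg hB (a - z)
  rw [ip_sub_left, ip_sub_right, ip_sub_right, ip_comm hB z a,
    ext_ip_self (hExt a ha)] at h2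
  linarith

lemma ext_norm (hB : B.PosDef) (hN : IsNorm N)
    (hExt : ∀ a ∈ extPts N, normu B a = 1)
    {a : Fin n → ℝ} (ha : a ∈ extPts N) : N a = 1 := by
  refine le_antisymm ha.1 ?_
  have := (inDual_ext hB hN hExt ha).le hN a
  rwa [ext_ip_self (hExt a ha)] at this

/-- At an extreme point `a`, the vector `e a` is `a` itself, because `a` is the element of
least `‖·‖ᵤ`-norm in `∂N(a)`. -/
lemma e_eq (hB : B.PosDef) (hN : IsNorm N)
    (hExt : ∀ a ∈ extPts N, normu B a = 1)
    (D : DecompStruct B N) {a : Fin n → ℝ} (ha : a ∈ extPts N) : D.e a = a := by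
  have hN1 := ext_norm hB hN hExt ha
  have haa := ext_ip_self (hExt a ha)
  have hmem : a ∈ subdiff B N a :=
    (mem_subdiff_iff hN a a).2 ⟨inDual_ext hB hN hExt ha, by rw [haa, hN1]⟩
  have he : D.e a ∈ subdiff B N a := by
    rw [D.subdiff_eq]
    refine ⟨0, (perpSub B (D.T a)).zero_mem, ?_, by simp⟩
    rw [dualNorm_le_one_iff hN]
    intro z _
    simp [ip]
  have he1 : ip B (D.e a) a = 1 := by rw [((mem_subdiff_iff hN a _).1 he).2, hN1]
  rw [D.subdiff_eq] at hmem
  obtain ⟨v, hv, -, hav⟩ := hmem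
  have hev : ip B (D.e a) v = 0 := hv _ (D.e_mem a)
  -- `1 = ⟪e, a⟫ = ⟪e, e⟫`, while `1 = ⟪a, a⟫ = ⟪e, e⟫ + ⟪v, v⟫`.
  have hee : ip B (D.e a) (D.e a) = 1 := by
    have h := he1
    rw [show ip B (D.e a) a = ip B (D.e a) (D.e a + v) by rw [← hav], ip_add_right, hev] at h
    linarith
  have hvv : ip B v v = 0 := by
    have h := haa
    rw [show ip B a a = ip B (D.e a + v) (D.e a + v) by rw [← hav], ip_add_right, ip_add_left,
      ip_add_left, hev, ip_comm hB v, hev, hee] at h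
    linarith
  have hv0 : v = 0 := by
    by_contra h
    exact (ip_self_pos hB h).ne' hvv
  rw [hv0, add_zero] at hav
  exact hav.symm

lemma sub_mem (hB : B.PosDef) (hN : IsNorm N)
    (hExt : ∀ a ∈ extPts N, normu B a = 1)
    (D : DecompStruct B N) {a y : Fin n → ℝ} (ha : a ∈ extPts N)
    (hy : InDual B N y) (h1 : ip B y a = 1) : y - a ∈ perpSub B (D.T a) := by
  have h : y ∈ subdiff B N a :=
    (mem_subdiff_iff hN a y).2 ⟨hy, by rw [h1, ext_norm hB hN hExt ha]⟩
  rw [D.subdiff_eq, e_eq hB hN hExt D ha] at h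
  obtain ⟨v, hv, -, rfl⟩ := h
  rw [add_sub_cancel_left]
  exact hv

lemma inDual_add (hB : B.PosDef) (hN : IsNorm N)
    (hExt : ∀ a ∈ extPts N, normu B a = 1)
    (D : DecompStruct B N) {a v : Fin n → ℝ} (ha : a ∈ extPts N)
    (hv : v ∈ perpSub B (D.T a)) (h1 : InDual B N v) : InDual B N (a + v) := by
  have h : a + v ∈ subdiff B N a := by
    rw [D.subdiff_eq, e_eq hB hN hExt D ha]
    exact ⟨v, hv, (dualNorm_le_one_iff hN v).2 h1, rfl⟩
  exact ((mem_subdiff_iff hN a _).1 h).1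

lemma ip_eq_zero (hB : B.PosDef) (hN : IsNorm N)
    (hExt : ∀ a ∈ extPts N, normu B a = 1)
    (D : DecompStruct B N) {a v : Fin n → ℝ} (ha : a ∈ extPts N)
    (hv : v ∈ perpSub B (D.T a)) : ip B a v = 0 :=
  hv a (by simpa [e_eq hB hN hExt D ha] using D.e_mem a)

/-! ### The greedy step -/

lemma max_pos (hB : B.PosDef) (hN : IsNorm N) {a r : Fin n → ℝ} (hr : r ≠ 0)
    (hmax : ∀ z, N z ≤ 1 → ip B r z ≤ ip B r a) : 0 < ip B r a := by
  refine lt_of_lt_of_le ?_ (hmax _ (hN.inv_smul hr).le)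
  rw [ip_smul_right]
  exact mul_pos (inv_pos.2 (hN.pos hr)) (ip_self_pos hB hr)

lemma inDual_scaled (hB : B.PosDef) (hN : IsNorm N) {a r : Fin n → ℝ} (hr : r ≠ 0)
    (hmax : ∀ z, N z ≤ 1 → ip B r z ≤ ip B r a) : InDual B N ((ip B r a)⁻¹ • r) := by
  intro z hz
  rw [ip_smul_left, inv_mul_le_iff₀ (max_pos hB hN hr hmax), mul_one]
  exact hmax z hz

/-- Subtracting from `r` its component along a maximizing extreme point `a` leaves a
remainder in `(T a)ᗮ`. -/
lemma sub_smul_mem_of_max (hB : B.PosDef) (hN : IsNorm N)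
    (hExt : ∀ a ∈ extPts N, normu B a = 1)
    (D : DecompStruct B N) {a r : Fin n → ℝ} (ha : a ∈ extPts N)
    (hr : r ≠ 0) (hmax : ∀ z, N z ≤ 1 → ip B r z ≤ ip B r a) :
    r - ip B r a • a ∈ perpSub B (D.T a) := by
  have hM := max_pos hB hN hr hmax
  have h := sub_mem hB hN hExt D ha (inDual_scaled hB hN hr hmax)
    (by rw [ip_smul_left, inv_mul_cancel₀ hM.ne'])
  have h2 := (perpSub B (D.T a)).smul_mem (ip B r a) h
  rwa [smul_sub, smul_smul, mul_inv_cancel₀ hM.ne', one_smul] at h2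

/-- If the remainder `r` lies in `(T b)ᗮ`, then the next maximizer `a` and `b` lie in each
other's complements `(T b)ᗮ` and `(T a)ᗮ`. -/
lemma cross_mem (hB : B.PosDef) (hN : IsNorm N)
    (hExt : ∀ a ∈ extPts N, normu B a = 1)
    (D : DecompStruct B N) {a b r : Fin n → ℝ} (ha : a ∈ extPts N)
    (hb : b ∈ extPts N) (hr : r ≠ 0) (hmax : ∀ z, N z ≤ 1 → ip B r z ≤ ip B r a)
    (hrb : r ∈ perpSub B (D.T b)) :
    b ∈ perpSub B (D.T a) ∧ a ∈ perpSub B (D.T b) := by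
  have hM := max_pos hB hN hr hmax
  set w := (ip B r a)⁻¹ • r with hw
  have hwD : InDual B N w := inDual_scaled hB hN hr hmax
  have hwa : ip B w a = 1 := by rw [hw, ip_smul_left, inv_mul_cancel₀ hM.ne']
  have hwb : w ∈ perpSub B (D.T b) := Submodule.smul_mem _ _ hrb
  have h1 := inDual_add hB hN hExt D hb hwb hwD
  have h2 := inDual_add hB hN hExt D hb (Submodule.neg_mem _ hwb) (hwD.neg hN)
  -- Testing `b + w` at `a` and `b - w` at `-a` gives both signs of `⟪b, a⟫`.
  have hba : ip B b a = 0 := by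
    have h3 := h1 a ha.1
    have h4 := h2 (-a) (by rw [hN.neg]; exact ha.1)
    rw [ip_add_left, hwa] at h3
    rw [ip_neg_right, ip_add_left, ip_neg_left, hwa] at h4
    linarith
  have hbQ : b ∈ perpSub B (D.T a) := by
    have h3 := sub_mem hB hN hExt D ha h1 (by rw [ip_add_left, hba, hwa, zero_add])
    have h4 := sub_mem hB hN hExt D ha hwD hwa
    have h5 := Submodule.sub_mem _ h3 h4
    rwa [show b + w - a - (w - a) = b by abel] at h5
  refine ⟨hbQ, ?_⟩
  have h6 := inDual_add hB hN hExt D ha hbQ (inDual_ext hB hN hExt hb)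
  have h7 := sub_mem hB hN hExt D hb h6
    (by rw [ip_add_left, ip_comm hB a b, hba, ext_ip_self (hExt b hb), zero_add])
  rwa [add_sub_cancel_right] at h7

/-- Property (II) for a mutually complementary family of extreme points. -/
lemma inDual_sum (hB : B.PosDef) (hN : IsNorm N)
    (hExt : ∀ a ∈ extPts N, normu B a = 1)
    (D : DecompStruct B N) {k : ℕ} {a : Fin k → Fin n → ℝ}
    (ha : ∀ i, a i ∈ extPts N) (hQ : ∀ i j, i ≠ j → a j ∈ perpSub B (D.T (a i)))
    (η : Fin k → ℝ) (hη : ∀ i, |η i| ≤ 1) (s : Finset (Fin k)) :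
    InDual B N (∑ i ∈ s, η i • a i) := by
  induction s using Finset.induction_on with
  | empty => intro z _; simp [ip]
  | insert j s hj ih =>
    rw [Finset.sum_insert hj]
    have ht : ∑ i ∈ s, η i • a i ∈ perpSub B (D.T (a j)) :=
      Submodule.sum_mem _ fun i hi => Submodule.smul_mem _ _
        (hQ j i (by rintro rfl; exact hj hi))
    have h1 := inDual_add hB hN hExt D (ha j) ht ih
    have h2 := (inDual_add hB hN hExt D (ha j) (Submodule.neg_mem _ ht) (ih.neg hN)).neg hN
    intro z hz
    have h3 := h1 z hz
    have h4 := h2 z hz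
    rw [ip_add_left] at h3
    rw [ip_neg_left, ip_add_left, ip_neg_left] at h4
    rw [ip_add_left, ip_smul_left]
    -- `η a + t` is a convex combination of `a + t` and `-a + t`.
    have := abs_le.1 (hη j)
    nlinarith [mul_le_mul_of_nonneg_left h3 (by linarith : 0 ≤ 1 + η j),
      mul_le_mul_of_nonneg_left h4 (by linarith : 0 ≤ 1 - η j)]

/-- An orthonormal family in `ℝⁿ` has at most `n` members. -/
lemma card_le (hB : B.PosDef) (hN : IsNorm N)
    (hExt : ∀ a ∈ extPts N, normu B a = 1)
    (D : DecompStruct B N) {k : ℕ} {a : Fin k → Fin n → ℝ}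
    (ha : ∀ i, a i ∈ extPts N) (hQ : ∀ i j, i ≠ j → a j ∈ perpSub B (D.T (a i))) : k ≤ n := by
  have : LinearIndependent ℝ a := by
    rw [Fintype.linearIndependent_iff]
    intro g hg i
    have h : ip B (a i) (∑ j, g j • a j) = 0 := by rw [hg]; simp [ip]
    rw [ip_sum_right, Finset.sum_eq_single i] at h
    · rwa [ip_smul_right, ext_ip_self (hExt _ (ha i)), mul_one] at h
    · intro j _ hj
      rw [ip_smul_right, ip_eq_zero hB hN hExt D (ha i) (hQ i j hj.symm), mul_zero]
    · simp
  simpa using this.fintype_card_le_finrank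

/-- Among the first `m + 1` greedy steps, either some stage has zero remainder, or there are
`m + 1` mutually complementary extreme points and the remainder lies in all complements. -/
lemma greedy (hB : B.PosDef) (hN : IsNorm N)
    (hExt : ∀ a ∈ extPts N, normu B a = 1)
    (D : DecompStruct B N) {x a₁ : Fin n → ℝ} (hx : x ≠ 0) (ha₁ : a₁ ∈ extPts N)
    (hmax₁ : ∀ z, N z ≤ 1 → ip B x z ≤ ip B x a₁) (m : ℕ) :
    ∃ (k : ℕ) (a : Fin (k + 1) → Fin n → ℝ) (γ : Fin (k + 1) → ℝ),
      a 0 = a₁ ∧ (∀ i, a i ∈ extPts N) ∧ (∀ i, 0 < γ i) ∧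
      (∀ i j, i ≠ j → a j ∈ perpSub B (D.T (a i))) ∧
      (∀ i, x - ∑ j, γ j • a j ∈ perpSub B (D.T (a i))) ∧
      (x - ∑ j, γ j • a j = 0 ∨ k = m) := by
  induction m with
  | zero =>
    refine ⟨0, fun _ => a₁, fun _ => ip B x a₁, rfl, fun _ => ha₁,
      fun _ => max_pos hB hN hx hmax₁, fun i j h => (h (Subsingleton.elim (α := Fin 1) i j)).elim, ?_,
      Or.inr rfl⟩
    intro i
    simpa using sub_smul_mem_of_max hB hN hExt D ha₁ hx hmax₁
  | succ m ih =>
    obtain ⟨k, a, γ, h0, ha, hγ, hQ, hr, hor⟩ := ih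
    by_cases hr0 : x - ∑ j, γ j • a j = 0
    · exact ⟨k, a, γ, h0, ha, hγ, hQ, hr, Or.inl hr0⟩
    obtain rfl : k = m := hor.resolve_left hr0
    set r := x - ∑ j, γ j • a j with hrdef
    obtain ⟨b, hb, hmax⟩ := exists_ext_max (B := B) hN r
    have hcross := fun i => cross_mem hB hN hExt D hb (ha i) hr0 hmax (hr i)
    have hrb := sub_smul_mem_of_max hB hN hExt D hb hr0 hmax
    have hsum : x - ∑ j : Fin (k + 1 + 1), (Fin.snoc γ (ip B r b) : Fin (k + 1 + 1) → ℝ) j •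
        (Fin.snoc a b : Fin (k + 1 + 1) → Fin n → ℝ) j = r - ip B r b • b := by
      rw [Fin.sum_univ_castSucc]
      simp only [Fin.snoc_castSucc, Fin.snoc_last]
      rw [hrdef]
      abel
    refine ⟨k + 1, Fin.snoc a b, Fin.snoc γ (ip B r b), ?_, ?_, ?_, ?_, ?_, Or.inr rfl⟩
    · rw [← Fin.castSucc_zero, Fin.snoc_castSucc, h0]
    · intro i
      induction i using Fin.lastCases with
      | last => simpa using hb
      | cast i => simpa using ha i
    · intro i
      induction i using Fin.lastCases with
      | last => simpa using max_pos hB hN hr0 hmax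
      | cast i => simpa using hγ i
    · intro i j hij
      induction i using Fin.lastCases with
      | last =>
        induction j using Fin.lastCases with
        | last => exact (hij rfl).elim
        | cast j => simpa using (hcross j).1
      | cast i =>
        induction j using Fin.lastCases with
        | last => simpa using (hcross i).2
        | cast j => simpa using hQ i j (fun h => hij (by rw [h]))
    · intro i
      rw [hsum]
      induction i using Fin.lastCases with
      | last => simpa using hrb
      | cast i =>
        rw [Fin.snoc_castSucc]
        exact Submodule.sub_mem _ (hr i) (Submodule.smul_mem _ _ (hcross i).2)

end Helpers

/-- **Orthogonal representation, necessity.**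
If every extreme point of the unit ball of `N` has unit `‖·‖ᵤ`-norm and `N` is decomposable,
then every nonzero `x` and every maximizer `a₁` of `⟪a, x⟫` over the extreme points admit an
orthogonal representation satisfying (I) and (II). -/
theorem orthogonal_representation_necessity {n : ℕ}
    (B : Matrix (Fin n) (Fin n) ℝ) (hB : B.PosDef)
    (N : (Fin n → ℝ) → ℝ) (hN : IsNorm N)
    (hExt : ∀ a ∈ extPts N, normu B a = 1)
    (D : DecompStruct B N) :
    ∀ x : Fin n → ℝ, x ≠ 0 →
      ∀ a₁ ∈ extPts N, (∀ a ∈ extPts N, ip B a x ≤ ip B a₁ x) →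
        ∃ (k : ℕ) (a : Fin (k + 1) → Fin n → ℝ) (γ : Fin (k + 1) → ℝ),
          a 0 = a₁ ∧ (∀ i, a i ∈ extPts N) ∧
          (∀ i j, i ≠ j → ip B (a i) (a j) = 0) ∧
          (∀ i, 0 < γ i) ∧ x = ∑ i, γ i • a i ∧ N x = ∑ i, γ i ∧
          (∀ η : Fin (k + 1) → ℝ, (∀ i, |η i| ≤ 1) →
            dualNorm B N (∑ i, η i • a i) ≤ 1) := by
  intro x hx a₁ ha₁ hmaxG
  have hmax₁ : ∀ z, N z ≤ 1 → ip B x z ≤ ip B x a₁ := by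
    obtain ⟨a, ha, hmax⟩ := exists_ext_max (B := B) hN x
    intro z hz
    have h := hmaxG a ha
    rw [ip_comm hB a, ip_comm hB a₁] at h
    exact (hmax z hz).trans h
  obtain ⟨k, a, γ, h0, ha, hγ, hQ, -, hor⟩ := greedy hB hN hExt D hx ha₁ hmax₁ n
  have hk := card_le hB hN hExt D ha hQ
  have hxsum : x = ∑ i, γ i • a i :=
    sub_eq_zero.1 (hor.resolve_right (by omega))
  have horth : ∀ i j, i ≠ j → ip B (a i) (a j) = 0 := fun i j hij =>
    ip_eq_zero hB hN hExt D (ha i) (hQ i j hij)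
  have hdual := fun η hη => inDual_sum hB hN hExt D ha hQ η hη Finset.univ
  refine ⟨k, a, γ, h0, ha, horth, hγ, hxsum, le_antisymm ?_ ?_, fun η hη =>
    (dualNorm_le_one_iff hN _).2 (hdual η hη)⟩
  · have key : ∀ s : Finset (Fin (k + 1)), N (∑ i ∈ s, γ i • a i) ≤ ∑ i ∈ s, γ i := by
      intro s
      induction s using Finset.induction_on with
      | empty => simp [hN.map_zero]
      | insert j s hj ih =>
        rw [Finset.sum_insert hj, Finset.sum_insert hj]
        refine (hN.triangle _ _).trans (add_le_add ?_ ih)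
        rw [hN.smul_eq, ext_norm hB hN hExt (ha j), abs_of_pos (hγ j), mul_one]
    rw [hxsum]
    exact key _
  · -- `∑ aᵢ` is in the dual unit ball and pairs with `x` to `∑ γᵢ`.
    have h := (hdual (fun _ => 1) (by simp)).le hN x
    refine le_trans (le_of_eq ?_) h
    rw [ip_sum_left]
    refine Finset.sum_congr rfl fun i _ => ?_
    rw [one_smul, hxsum, ip_sum_right, Finset.sum_eq_single i]
    · rw [ip_smul_right, ext_ip_self (hExt _ (ha i)), mul_one]
    · intro j _ hj
      rw [ip_smul_right, horth i j hj.symm, mul_zero]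
    · simp

end PGH
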